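/- Let (L, w)/(F, v) be a finite Galois extension of valued fields, K a decomposition subfield w.r.t. the prolongation w, with coset representatives τ₁ = 1, τ₂, …, τ_r of Gal(L/K) in Gal(L/F), giving the distinct prolongations wᵢ = w ∘ τᵢ of v to L. Then there exists y ∈ K with y ∈ (1 + M_w) ∩ ⋂_{i=2}^{r} M_{w∘τᵢ}. -/

import Mathlib

/-!
Weak approximation among the finitely many conjugates of `W` yields `x ∈ L` that is congruent to `1`
modulo the maximal ideal of `W` and lies in the maximal ideal of every conjugate `σ • W ≠ W`: two
conjugate valuation rings are incomparable unless equal, because the group is finite. The product of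
`x` over its orbit under the decomposition group is still of this kind, and it is fixed by the
decomposition group, hence lies in the decomposition field.

For weak approximation, two incomparable valuation rings are separated by some `z`, which may fail
to be integral at the other rings of the family. Replacing `z` by `z / P(z)`, where `P` is a monic
integer polynomial with `P ≡ 1 mod X (X - 1)`, of degree at least two and without zeros at the
finitely many relevant residues of `z`, makes it integral everywhere without changing it modulo the
two maximal ideals where it is congruent to `0` or `1`.
-/

open Polynomial MulAction
open scoped Pointwise

section Products

variable {R Γ₀ ι : Type*} [CommRing R] [LinearOrderedCommGroupWithZero Γ₀] (v : Valuation R Γ₀)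

theorem valuation_mul_sub_one_lt_one {a b : R} (ha : v (a - 1) < 1) (hb : v (b - 1) < 1) :
    v (a * b - 1) < 1 := by
  have h_expand : a * b - 1 = (a - 1) * (b - 1) + (a - 1) + (b - 1) := by ring
  have h_mul : v ((a - 1) * (b - 1)) < 1 := by
    rw [map_mul]
    exact mul_lt_one_of_lt_of_le ha hb.le
  rw [h_expand]
  exact v.map_add_lt (v.map_add_lt h_mul ha) hb

theorem valuation_prod_sub_one_lt_one {s : Finset ι} {f : ι → R}
    (h : ∀ i ∈ s, v (f i - 1) < 1) : v (∏ i ∈ s, f i - 1) < 1 :=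
  Finset.prod_induction f (fun a ↦ v (a - 1) < 1)
    (fun _ _ ↦ valuation_mul_sub_one_lt_one v) (by simp) h

theorem valuation_prod_lt_one {s : Finset ι} {f : ι → R} (h : ∀ i ∈ s, v (f i) ≤ 1) {j : ι}
    (hj : j ∈ s) (hfj : v (f j) < 1) : v (∏ i ∈ s, f i) < 1 := by
  classical
  rw [← Finset.mul_prod_erase s f hj, map_mul, map_prod]
  exact mul_lt_one_of_lt_of_le hfj
    (Finset.prod_le_one' fun i hi ↦ h i (Finset.mem_of_mem_erase hi))

end Products

theorem exists_monic_forall_aeval_ne_zero {R ι : Type*} {A : ι → Type*} [CommRing R]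
    [Nontrivial R] [∀ i, CommRing (A i)] [∀ i, Nontrivial (A i)] [∀ i, Algebra R (A i)] [Finite ι]
    (a : ∀ i, A i) :
    ∃ P : R[X], P.Monic ∧ 2 ≤ P.natDegree ∧ X * (X - 1) ∣ P - 1 ∧ ∀ i, aeval (a i) P ≠ 0 := by
  classical
  cases nonempty_fintype ι
  -- A zero of `X * (X - 1) * Q + 1` would be integral over `R`, hence a zero of `Q`: absurd.
  let Q : R[X] := ∏ i with IsIntegral R (a i), minpoly R (a i)
  have hQ : Q.Monic := monic_prod_of_monic _ _ fun i hi ↦ minpoly.monic (Finset.mem_filter.1 hi).2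
  have hX_sub : (X - 1 : R[X]).Monic := monic_X_sub_C (1 : R)
  have hX : (X * (X - 1) : R[X]).Monic := monic_X.mul hX_sub
  have hX_deg : (X * (X - 1) : R[X]).natDegree = 2 := by
    rw [monic_X.natDegree_mul hX_sub, natDegree_X, ← C_1, natDegree_X_sub_C]
  have hdeg : 2 ≤ (X * (X - 1) * Q).natDegree := by
    rw [hX.natDegree_mul hQ, hX_deg]
    exact Nat.le_add_right 2 _
  have h_lt : (1 : R[X]).natDegree < (X * (X - 1) * Q).natDegree := by
    rw [natDegree_one]
    exact two_pos.trans_le hdeg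
  have h_monic : (X * (X - 1) * Q + 1).Monic := (hX.mul hQ).add_of_left (degree_lt_degree h_lt)
  refine ⟨X * (X - 1) * Q + 1, h_monic, ?_, by simp, fun i h_zero ↦ ?_⟩
  · rwa [natDegree_add_eq_left_of_natDegree_lt h_lt]
  · have h_int : IsIntegral R (a i) := ⟨_, h_monic, h_zero⟩
    have hQ_zero : aeval (a i) Q = 0 := by
      rw [map_prod]
      exact Finset.prod_eq_zero (Finset.mem_filter.2 ⟨Finset.mem_univ i, h_int⟩) (minpoly.aeval R _)
    rw [map_add, map_mul, hQ_zero, mul_zero, zero_add, map_one] at h_zero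
    exact one_ne_zero h_zero

section Modification

variable {L : Type*} [Field L] {z : L}

theorem valuation_aeval_eq_one_iff {R : Type*} [CommRing R] (V : ValuationSubring L) [Algebra R V]
    [Algebra R L] [IsScalarTower R V L] (z : V) (P : R[X]) :
    V.valuation (aeval (z : L) P) = 1 ↔ aeval (IsLocalRing.residue V z) P ≠ 0 := by
  have h_coe : aeval (z : L) P = (aeval z P : V) := aeval_algebraMap_apply L z P
  have h_residue : aeval (IsLocalRing.residue V z) P = IsLocalRing.residue V (aeval z P) :=
    aeval_algebraMap_apply (IsLocalRing.ResidueField V) z P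
  rw [h_coe, h_residue, IsLocalRing.residue_ne_zero_iff_isUnit, V.valuation_eq_one_iff]

theorem div_aeval_mem_of_notMem {V : ValuationSubring L} (hz : z ∉ V) {P : V[X]} (hP : P.Monic)
    (hdeg : 2 ≤ P.natDegree) : z / aeval z P ∈ V := by
  by_contra h_div
  have h_inv : aeval z P / z ∈ V := by
    simpa only [inv_div] using (V.mem_or_inv_mem _).resolve_left h_div
  have hz₀ : z ≠ 0 := fun h ↦ hz (h ▸ V.zero_mem)
  let c : V := ⟨aeval z P / z, h_inv⟩
  have h_monic : (P - C c * X).Monic := by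
    refine hP.sub_of_left ((degree_C_mul_X_le _).trans_lt ?_)
    rw [degree_eq_natDegree hP.ne_zero]
    exact_mod_cast hdeg
  have h_root : aeval z (P - C c * X) = 0 := by
    rw [map_sub, map_mul, aeval_C, aeval_X, ValuationSubring.algebraMap_apply,
      div_mul_cancel₀ _ hz₀, sub_self]
  obtain ⟨y, rfl⟩ := IsIntegrallyClosed.isIntegral_iff.1 (⟨_, h_monic, h_root⟩ : IsIntegral V z)
  exact hz y.2

theorem exists_forall_div_aeval_mem {ι : Type*} [Finite ι] (V : ι → ValuationSubring L) (z : L) :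
    ∃ P : ℤ[X], X * (X - 1) ∣ P - 1 ∧ ∀ i, z / aeval z P ∈ V i := by
  obtain ⟨P, h_monic, hdeg, hdvd, h_ne⟩ := exists_monic_forall_aeval_ne_zero (R := ℤ)
    fun i : {i // z ∈ V i} ↦ IsLocalRing.residue (V i) ⟨z, i.2⟩
  refine ⟨P, hdvd, fun i ↦ ?_⟩
  by_cases hz : z ∈ V i
  · have h_unit : (V i).valuation (aeval z P) = 1 :=
      (valuation_aeval_eq_one_iff (V i) ⟨z, hz⟩ P).2 (h_ne ⟨i, hz⟩)
    rwa [← ValuationSubring.valuation_le_one_iff, map_div₀, h_unit, div_one,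
      ValuationSubring.valuation_le_one_iff]
  · rw [← aeval_map_algebraMap (V i)]
    exact div_aeval_mem_of_notMem hz (h_monic.map _) (by rwa [h_monic.natDegree_map])

theorem valuation_div_aeval_sub_self_lt_one {R : Type*} [CommRing R] {V : ValuationSubring L}
    [Algebra R V] [Algebra R L] [IsScalarTower R V L] {P : R[X]}
    (hP : X * (X - 1) ∣ P - 1) (hz : z ∈ V) (hz₁ : V.valuation (z * (z - 1)) < 1) :
    V.valuation (z / aeval z P - z) < 1 := by
  obtain ⟨Q, hQ⟩ := hP
  have hQ_le : V.valuation (aeval z Q) ≤ 1 := by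
    have h_coe : aeval z Q = (aeval (⟨z, hz⟩ : V) Q : V) := aeval_algebraMap_apply L (⟨z, hz⟩ : V) Q
    rw [h_coe]
    exact V.valuation_le_one _
  have h_sub : V.valuation (aeval z P - 1) < 1 := by
    have h_eq : aeval z P - 1 = z * (z - 1) * aeval z Q := by
      simpa using congrArg (aeval z) hQ
    rw [h_eq, map_mul]
    exact mul_lt_one_of_lt_of_le hz₁ hQ_le
  have h_one : V.valuation (aeval z P) = 1 := by
    simpa using V.valuation.map_one_add_of_lt h_sub
  have h_ne : aeval z P ≠ 0 := V.valuation.ne_zero_iff.1 (h_one ▸ one_ne_zero)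
  have h_eq : z / aeval z P - z = -((aeval z P - 1) * z) / aeval z P := by
    field_simp
    ring
  rw [h_eq, map_div₀, h_one, div_one, Valuation.map_neg, map_mul]
  exact mul_lt_one_of_lt_of_le h_sub ((V.valuation_le_one_iff z).2 hz)

end Modification

section Approximation

variable {L : Type*} [Field L] {W : ValuationSubring L}

theorem exists_valuation_sub_one_lt_one_of_not_le {V : ValuationSubring L}
    (hWV : ¬ W ≤ V) (hVW : ¬ V ≤ W) :
    ∃ z : L, W.valuation (z - 1) < 1 ∧ V.valuation z < 1 := by
  obtain ⟨a, haW, haV⟩ := SetLike.not_le_iff_exists.1 hWV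
  obtain ⟨b, hbV, hbW⟩ := SetLike.not_le_iff_exists.1 hVW
  rw [← ValuationSubring.valuation_le_one_iff] at haW hbV
  rw [← ValuationSubring.valuation_le_one_iff, not_le] at haV hbW
  have hb₀ : b ≠ 0 := W.valuation.pos_iff.1 (zero_lt_one.trans hbW)
  have hcW : W.valuation (a / b) < 1 := by
    rw [map_div₀]
    exact (div_lt_one₀ (W.valuation.pos_iff.2 hb₀)).2 (haW.trans_lt hbW)
  have hcV : 1 < V.valuation (a / b) := by
    rw [map_div₀]
    exact (one_lt_div₀ (V.valuation.pos_iff.2 hb₀)).2 (hbV.trans_lt haV)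
  generalize a / b = c at hcW hcV
  have hW : W.valuation (1 + c) = 1 := W.valuation.map_one_add_of_lt hcW
  have hV : V.valuation (1 + c) = V.valuation c :=
    V.valuation.map_add_eq_of_lt_right ((map_one _).trans_lt hcV)
  have h_ne : 1 + c ≠ 0 := W.valuation.ne_zero_iff.1 (hW ▸ one_ne_zero)
  refine ⟨(1 + c)⁻¹, ?_, ?_⟩
  · have h_eq : (1 + c)⁻¹ - 1 = -c / (1 + c) := by
      field_simp
      ring
    rwa [h_eq, map_div₀, hW, div_one, Valuation.map_neg]
  · rw [map_inv₀, hV]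
    exact inv_lt_one_of_one_lt₀ hcV

theorem exists_valuation_sub_one_lt_one_and_forall_mem {ι : Type*} [Finite ι]
    (V : ι → ValuationSubring L) {j : ι} (hWV : ¬ W ≤ V j) (hVW : ¬ V j ≤ W) :
    ∃ z : L, W.valuation (z - 1) < 1 ∧ (V j).valuation z < 1 ∧ ∀ i, z ∈ V i := by
  obtain ⟨z, hzW, hzV⟩ := exists_valuation_sub_one_lt_one_of_not_le hWV hVW
  obtain ⟨P, hP, h_mem⟩ := exists_forall_div_aeval_mem V z
  refine ⟨z / aeval z P, ?_, ?_, h_mem⟩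
  · have hz_mem : z ∈ W := by
      simpa using W.add_mem _ _ ((W.valuation_le_one_iff _).1 hzW.le) W.one_mem
    have h_near : W.valuation (z / aeval z P - z) < 1 := by
      refine valuation_div_aeval_sub_self_lt_one hP hz_mem ?_
      rw [mul_comm, map_mul]
      exact mul_lt_one_of_lt_of_le hzW ((W.valuation_le_one_iff z).2 hz_mem)
    simpa using W.valuation.map_add_lt h_near hzW
  · have hz_mem : z ∈ V j := ((V j).valuation_le_one_iff z).1 hzV.le
    have h_near : (V j).valuation (z / aeval z P - z) < 1 := by
      refine valuation_div_aeval_sub_self_lt_one hP hz_mem ?_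
      rw [map_mul]
      exact mul_lt_one_of_lt_of_le hzV
        (((V j).valuation_le_one_iff _).2 (sub_mem hz_mem (one_mem _)))
    simpa using (V j).valuation.map_add_lt h_near hzV

theorem exists_valuation_sub_one_lt_one_and_forall_valuation_lt_one {ι : Type*} [Finite ι]
    (V : ι → ValuationSubring L) (hWV : ∀ i, ¬ W ≤ V i) (hVW : ∀ i, ¬ V i ≤ W) :
    ∃ x : L, W.valuation (x - 1) < 1 ∧ ∀ i, (V i).valuation x < 1 := by
  cases nonempty_fintype ι
  choose z hzW hzV h_mem using fun j ↦
    exists_valuation_sub_one_lt_one_and_forall_mem V (hWV j) (hVW j)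
  exact ⟨∏ j, z j, valuation_prod_sub_one_lt_one _ fun j _ ↦ hzW j, fun i ↦
    valuation_prod_lt_one _ (fun j _ ↦ ((V i).valuation_le_one_iff _).2 (h_mem j i))
      (Finset.mem_univ i) (hzV i)⟩

end Approximation

section Action

variable {G L : Type*} [Group G] [Field L] [MulSemiringAction G L]

theorem valuation_smul_smul_lt_one_iff (V : ValuationSubring L) (g : G) (x : L) :
    (g • V).valuation (g • x) < 1 ↔ V.valuation x < 1 := by
  simp only [← ValuationSubring.mem_nonunits_iff, ValuationSubring.mem_nonunits_iff_or,
    smul_eq_zero_iff_eq, ← smul_inv'', ValuationSubring.smul_mem_pointwise_smul_iff]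

theorem exists_valuation_sub_one_lt_one_and_forall_smul_valuation_lt_one [Finite G]
    (W : ValuationSubring L) :
    ∃ x : L, W.valuation (x - 1) < 1 ∧ ∀ g : G, g • W ≠ W → (g • W).valuation x < 1 := by
  obtain ⟨x, hxW, hx⟩ := exists_valuation_sub_one_lt_one_and_forall_valuation_lt_one
    (fun g : {g : G // g • W ≠ W} ↦ g.1 • W) (fun g h ↦ g.2 (smul_eq_of_le_smul h))
    (fun g h ↦ g.2 (smul_eq_of_smul_le h))
  exact ⟨x, hxW, fun g hg ↦ hx ⟨g, hg⟩⟩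

theorem exists_stabilizer_smul_eq_and_valuation_sub_one_lt_one [Finite G]
    (W : ValuationSubring L) :
    ∃ y : L, (∀ g ∈ stabilizer G W, g • y = y) ∧ W.valuation (y - 1) < 1 ∧
      ∀ g : G, g • W ≠ W → (g • W).valuation y < 1 := by
  cases nonempty_fintype (stabilizer G W)
  obtain ⟨x, hxW, hx⟩ := exists_valuation_sub_one_lt_one_and_forall_smul_valuation_lt_one (G := G) W
  refine ⟨∏ d : stabilizer G W, d • x, fun g hg ↦ ?_, ?_, fun g hg ↦ ?_⟩
  · rw [Finset.smul_prod']
    exact Fintype.prod_equiv (Equiv.mulLeft (⟨g, hg⟩ : stabilizer G W)) _ _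
      fun d ↦ smul_smul g (d : G) x
  · refine valuation_prod_sub_one_lt_one _ fun d _ ↦ ?_
    have h_conj := (valuation_smul_smul_lt_one_iff W (d : G) (x - 1)).2 hxW
    rwa [smul_sub, smul_one, d.2] at h_conj
  · have h_factor (d : stabilizer G W) : (g • W).valuation (d • x) < 1 := by
      have h_ne : ((d : G)⁻¹ * g) • W ≠ W := by
        rwa [mul_smul, ne_eq, inv_smul_eq_iff, mem_stabilizer_iff.1 d.2]
      have h_conj := (valuation_smul_smul_lt_one_iff _ (d : G) x).2 (hx _ h_ne)
      rwa [smul_smul, mul_inv_cancel_left] at h_conj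
    exact valuation_prod_lt_one _ (fun d _ ↦ (h_factor d).le) (Finset.mem_univ 1) (h_factor 1)

end Action

section Galois

variable {F L : Type*} [Field F] [Field L] [Algebra F L]

theorem comap_eq_inv_smul (W : ValuationSubring L) (σ : L ≃ₐ[F] L) :
    W.comap σ.toAlgHom.toRingHom = σ⁻¹ • W :=
  SetLike.ext fun x ↦ (ValuationSubring.mem_inv_pointwise_smul_iff (g := σ) (x := x)).symm

theorem mem_decompositionSubgroup_iff_comap_eq {W : ValuationSubring L} {σ : L ≃ₐ[F] L} :
    σ ∈ W.decompositionSubgroup F ↔ W.comap σ.toAlgHom.toRingHom = W := by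
  rw [comap_eq_inv_smul, ← mem_stabilizer_iff, inv_mem_iff]

theorem stmt16_general [FiniteDimensional F L] [IsGalois F L] (W : ValuationSubring L)
    (K : IntermediateField F L) (hK : K.fixingSubgroup ≤ W.decompositionSubgroup F) :
    ∃ y ∈ K, W.valuation (y - 1) < 1 ∧
      ∀ σ ∉ W.decompositionSubgroup F, (W.comap σ.toAlgHom.toRingHom).valuation y < 1 := by
  obtain ⟨y, h_fixed, hyW, hy⟩ :=
    exists_stabilizer_smul_eq_and_valuation_sub_one_lt_one (G := L ≃ₐ[F] L) W
  have hyK : y ∈ K := by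
    rw [← IsGalois.fixedField_fixingSubgroup K, IntermediateField.mem_fixedField_iff]
    exact fun σ hσ ↦ h_fixed σ (hK hσ)
  refine ⟨y, hyK, hyW, fun σ hσ ↦ ?_⟩
  rw [mem_decompositionSubgroup_iff_comap_eq] at hσ
  rw [comap_eq_inv_smul] at hσ ⊢
  exact hy σ⁻¹ hσ

end Galois

set_option maxHeartbeats 1000000 in
theorem stmt16 {F L : Type*} [Field F] [Field L] [Algebra F L]
    [FiniteDimensional F L] [IsGalois F L]
    (W : ValuationSubring L)
    (K : IntermediateField F L)
    -- `K` is the decomposition subfield of `L/F` w.r.t. the prolongation `W` of `v`: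
    (hK : ∀ σ : L ≃ₐ[F] L, σ ∈ K.fixingSubgroup ↔ (∀ x : L, x ∈ W ↔ σ x ∈ W))
    {r : ℕ} (τ : Fin r → (L ≃ₐ[F] L)) (hr : 0 < r)
    (hτ0 : τ ⟨0, hr⟩ = 1)
    -- the `τ i` represent the cosets of `Gal(L/K)` in `Gal(L/F)`:
    (hcosets : ∀ σ : L ≃ₐ[F] L, ∃ i : Fin r, (τ i)⁻¹ * σ ∈ K.fixingSubgroup)
    -- the prolongations `w ∘ τ i` of `v` to `L` are pairwise distinct:
    (hdist : ∀ i j : Fin r, i ≠ j →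
      W.comap (τ i).toAlgHom.toRingHom ≠ W.comap (τ j).toAlgHom.toRingHom) :
    -- then there is `y ∈ K` with `y ∈ (1 + M_w) ∩ ⋂_{i ≠ 0} M_{w ∘ τ i}`:
    ∃ y : L, y ∈ K ∧ W.valuation (y - 1) < 1 ∧
      ∀ i : Fin r, i ≠ ⟨0, hr⟩ →
        (W.comap (τ i).toAlgHom.toRingHom).valuation y < 1 := by
  obtain ⟨y, hyK, hyW, hy⟩ := stmt16_general W K fun σ hσ ↦
    mem_decompositionSubgroup_iff_comap_eq.2 (SetLike.ext fun x ↦ ((hK σ).1 hσ x).symm)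
  exact ⟨y, hyK, hyW, fun i hi ↦ hy (τ i) fun h ↦ hdist i _ hi <| by
    rw [mem_decompositionSubgroup_iff_comap_eq.1 h, hτ0]; rfl⟩
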